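/- Let X = (X_t)_{t≥0} be a real-valued additive process (X_0 = 0, independent increments, continuous in probability, cadlag paths) with E[X_t] = 0 and E[|X_t|^n] < ∞ for all n ≥ 1 and t ≥ 0. Then for every n ≥ 1 the process M^(n)_t = Γ_n(X_t, −F_2(t), −F_3(t), …, −F_n(t)) is a martingale with respect to the natural filtration of X. -/

import Mathlib

open MeasureTheory ProbabilityTheory Filter Topology
open scoped NNReal

/-- The Kendall polynomials `Γ_n`, expressing moments in terms of cumulants:
`Γ_0 = 1` and `Γ_{n+1}(x_1,…,x_{n+1}) = Σ_{j=0}^n C(n,j) Γ_j(x_1,…,x_j) x_{n+1-j}`.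
The argument function `x : ℕ → ℝ` encodes the variables `x_1, x_2, …`
(only the values `x 1, …, x n` are used by `kendall n x`). -/
noncomputable def kendall : ℕ → (ℕ → ℝ) → ℝ
  | 0, _ => 1
  | n + 1, x =>
      ∑ j ∈ (Finset.range (n + 1)).attach,
        (n.choose j.1 : ℝ) * kendall j.1 x * x (n + 1 - j.1)
decreasing_by exact Finset.mem_range.mp j.2

/-- A function `f : ℝ≥0 → ℝ` is cadlag: right-continuous with left limits. -/
def IsCadlag (f : ℝ≥0 → ℝ) : Prop :=
  (∀ t : ℝ≥0, ContinuousWithinAt f (Set.Ici t) t) ∧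
    ∀ t : ℝ≥0, 0 < t → ∃ l : ℝ, Tendsto f (𝓝[<] t) (𝓝 l)

/-!
The Kendall polynomials have exponential generating function `exp (∑ xₖ zᵏ / k!)`, hence are of
binomial type: `Γₙ(x + y) = ∑ C(n, j) Γⱼ(x) Γₙ₋ⱼ(y)`, with `Γₙ(x, 0, 0, …) = xⁿ`. So if `D` has
cumulants `δ` and is independent of a σ-algebra `m` for which `Y` is measurable, expanding in powers
of `D` gives `E[Γₙ((Y + D, 0, …) + y) | m] = Γₙ(δ + (Y, 0, …) + y)`. Cumulants of an independent
increment subtract, so with `Y = X_s`, `D = X_t - X_s`, `y = -κ_t` and `δ = κ_t - κ_s` the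
right-hand side is `Γₙ((X_s, 0, …) - κ_s)`.
-/

section ExponentialGeneratingFunction

open PowerSeries Finset

variable {K : Type*} [Field K]

/-- The exponential generating function `∑ aₙ zⁿ / n!` of a sequence `a`, as a formal power
series. -/
noncomputable def egf (a : ℕ → K) : K⟦X⟧ :=
  PowerSeries.mk fun n => a n / (n.factorial : K)

lemma coeff_egf (a : ℕ → K) (n : ℕ) : coeff n (egf a) = a n / (n.factorial : K) :=
  coeff_mk n _

lemma egf_add (a b : ℕ → K) : egf (a + b) = egf a + egf b := by
  ext n
  simp only [coeff_egf, map_add, Pi.add_apply, add_div]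

variable [CharZero K]

lemma egf_injective : Function.Injective (egf : (ℕ → K) → K⟦X⟧) := fun a b h =>
  funext fun n => (div_left_inj' (Nat.cast_ne_zero.2 n.factorial_ne_zero)).1 <| by
    rw [← coeff_egf, ← coeff_egf, h]

lemma egf_mul (a b : ℕ → K) :
    egf a * egf b = egf fun n => ∑ p ∈ antidiagonal n, (n.choose p.1 : K) * a p.1 * b p.2 := by
  ext n
  simp only [coeff_mul, coeff_egf, sum_div]
  refine sum_congr rfl fun p hp => ?_
  obtain rfl := mem_antidiagonal.1 hp
  have hfact (k : ℕ) : (k.factorial : K) ≠ 0 := Nat.cast_ne_zero.2 k.factorial_ne_zero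
  have := hfact (p.1 + p.2)
  rw [Nat.cast_add_choose]
  field_simp

lemma derivative_egf (a : ℕ → K) : d⁄dX K (egf a) = egf fun n => a (n + 1) := by
  ext n
  have : ((n + 1 : ℕ) : K) ≠ 0 := Nat.cast_ne_zero.2 n.succ_ne_zero
  rw [coeff_derivative, coeff_egf, coeff_egf, Nat.factorial_succ, Nat.cast_mul, ← Nat.cast_succ]
  field_simp

end ExponentialGeneratingFunction

section Kendall

open PowerSeries Finset

lemma sum_antidiagonal_eq_of_snd_ne_zero {M : Type*} [AddCommMonoid M] {u : ℕ × ℕ → M}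
    (hu : ∀ i j, j ≠ 0 → u (i, j) = 0) (n : ℕ) : ∑ p ∈ antidiagonal n, u p = u (n, 0) := by
  refine sum_eq_single_of_mem (n, 0) (by simp) ?_
  rintro ⟨i, j⟩ hij hne
  refine hu i j ?_
  rintro rfl
  exact hne (by simpa using hij)

lemma kendall_zero (x : ℕ → ℝ) : kendall 0 x = 1 := by
  rw [kendall]

lemma kendall_succ (n : ℕ) (x : ℕ → ℝ) :
    kendall (n + 1) x =
      ∑ p ∈ antidiagonal n, (n.choose p.1 : ℝ) * kendall p.1 x * x (p.2 + 1) := by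
  rw [kendall, sum_attach (range (n + 1))
    fun j => (n.choose j : ℝ) * kendall j x * x (n + 1 - j),
    Nat.sum_antidiagonal_eq_sum_range_succ
      fun i j => (n.choose i : ℝ) * kendall i x * x (j + 1)]
  refine sum_congr rfl fun j hj => ?_
  rw [Nat.sub_add_comm (mem_range_succ_iff.1 hj)]

lemma derivative_egf_kendall (x : ℕ → ℝ) :
    d⁄dX ℝ (egf fun n => kendall n x) = (egf fun n => kendall n x) * egf fun n => x (n + 1) := by
  simp only [derivative_egf, egf_mul, kendall_succ]

lemma eq_kendall_of_derivative_egf {b x : ℕ → ℝ} (h0 : b 0 = 1)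
    (hb : d⁄dX ℝ (egf b) = egf b * egf fun n => x (n + 1)) (n : ℕ) : b n = kendall n x := by
  rw [derivative_egf, egf_mul] at hb
  induction n using Nat.strong_induction_on with
  | _ n ih =>
    cases n with
    | zero => rw [h0, kendall_zero]
    | succ n =>
      rw [congrFun (egf_injective hb) n, kendall_succ]
      refine sum_congr rfl fun p hp => ?_
      rw [ih p.1 (Nat.antidiagonal.fst_lt hp)]

lemma kendall_add (x y : ℕ → ℝ) (n : ℕ) :
    kendall n (x + y) =
      ∑ p ∈ antidiagonal n, (n.choose p.1 : ℝ) * kendall p.1 x * kendall p.2 y := by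
  symm
  refine eq_kendall_of_derivative_egf (b := fun n => ∑ p ∈ antidiagonal n,
    (n.choose p.1 : ℝ) * kendall p.1 x * kendall p.2 y) (by simp [kendall_zero]) ?_ n
  have hshift : (egf fun n => (x + y) (n + 1)) =
      (egf fun n => x (n + 1)) + egf fun n => y (n + 1) := egf_add _ _
  rw [← egf_mul (fun n => kendall n x) (fun n => kendall n y), Derivation.leibniz,
    derivative_egf_kendall, derivative_egf_kendall, hshift, smul_eq_mul, smul_eq_mul]
  ring

lemma kendall_single (x : ℝ) (n : ℕ) : kendall n (Pi.single 1 x) = x ^ n := by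
  induction n with
  | zero => rw [kendall_zero, pow_zero]
  | succ n ih =>
    rw [kendall_succ, sum_antidiagonal_eq_of_snd_ne_zero fun i j hj => by simp [hj]]
    simp [ih, pow_succ]

lemma kendall_zero_right {n : ℕ} (hn : n ≠ 0) : kendall n 0 = 0 := by
  rw [← Pi.single_zero 1, kendall_single, zero_pow hn]

lemma kendall_single_add (x : ℝ) (y : ℕ → ℝ) (n : ℕ) :
    kendall n (Pi.single 1 x + y) =
      ∑ p ∈ antidiagonal n, (n.choose p.1 : ℝ) * x ^ p.1 * kendall p.2 y := by
  simp only [kendall_add, kendall_single]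

lemma kendall_single_add_add (x d : ℝ) (y : ℕ → ℝ) (n : ℕ) :
    kendall n (Pi.single 1 (x + d) + y) =
      ∑ p ∈ antidiagonal n, (n.choose p.1 : ℝ) * (d ^ p.1 * kendall p.2 (Pi.single 1 x + y)) := by
  simp only [add_comm x, Pi.single_add, add_assoc, kendall_single_add d, mul_assoc]

lemma ite_neg_eq_single_sub (x : ℝ) (c : ℕ → ℝ) :
    (fun k => if k = 1 then x else -c k) = Pi.single 1 x - fun k => if k = 1 then 0 else c k := by
  ext k
  by_cases hk : k = 1 <;> simp [hk]

lemma continuous_kendall_single_add (y : ℕ → ℝ) (n : ℕ) :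
    Continuous fun x : ℝ => kendall n (Pi.single 1 x + y) := by
  simp only [kendall_single_add]
  fun_prop

end Kendall

section Independence

variable {Ω : Type*} {m m' mΩ : MeasurableSpace Ω} {μ : Measure Ω} {f g : Ω → ℝ}

lemma indepFun_of_indep_comap (hf : Measurable[m] f)
    (h : Indep (MeasurableSpace.comap g inferInstance) m μ) : IndepFun f g μ :=
  ((IndepFun_iff_Indep g f μ).2 (indep_of_indep_of_le_right h hf.comap_le)).symm

lemma condExp_mul_of_indep [IsFiniteMeasure μ] (hm : m ≤ mΩ) (hm' : m' ≤ mΩ)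
    (hf : StronglyMeasurable[m] f) (hg : StronglyMeasurable[m'] g) (h : Indep m' m μ)
    (hgf : Integrable (g * f) μ) (hg_int : Integrable g μ) :
    μ[g * f | m] =ᵐ[μ] fun ω => (∫ ω', g ω' ∂μ) * f ω := by
  filter_upwards [condExp_mul_of_stronglyMeasurable_right hf hgf hg_int,
    condExp_indep_eq hm' hm hg h] with ω hmul hindep
  rw [hmul, Pi.mul_apply, hindep]

end Independence

section Cumulants

open Finset
open Finset.HasAntidiagonal.antidiagonal (fst_le snd_le)

variable {Ω : Type*} {mΩ : MeasurableSpace Ω} {μ : Measure Ω} {f g : Ω → ℝ}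
  {κ η : ℕ → ℝ} {k n : ℕ}

lemma integrable_pow_of_memLp [IsFiniteMeasure μ] (hf : MemLp f n μ) (hk : k ≤ n) :
    Integrable (fun ω => f ω ^ k) μ := by
  refine ((hf.mono_exponent (Nat.cast_le.2 hk)).integrable_norm_pow').mono (hf.1.pow k) ?_
  exact Eventually.of_forall fun ω => by simp

lemma integrable_kendall_single_add [IsFiniteMeasure μ] (hf : MemLp f n μ) (hk : k ≤ n)
    (y : ℕ → ℝ) : Integrable (fun ω => kendall k (Pi.single 1 (f ω) + y)) μ := by
  simp only [kendall_single_add]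
  exact integrable_finsetSum _ fun p hp => ((integrable_pow_of_memLp hf
    ((fst_le hp).trans hk)).const_mul _).mul_const _

lemma indepFun_pow_kendall (hindep : IndepFun f g μ) (y : ℕ → ℝ) (i j : ℕ) :
    IndepFun (fun ω => g ω ^ i) (fun ω => kendall j (Pi.single 1 (f ω) + y)) μ :=
  hindep.symm.comp (measurable_id.pow_const i) (continuous_kendall_single_add y j).measurable

lemma integrable_pow_mul_kendall [IsFiniteMeasure μ] (hindep : IndepFun f g μ) (hf : MemLp f n μ)
    (hg : MemLp g n μ) (y : ℕ → ℝ) {i j : ℕ} (hi : i ≤ n) (hj : j ≤ n) :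
    Integrable (fun ω => g ω ^ i * kendall j (Pi.single 1 (f ω) + y)) μ :=
  (indepFun_pow_kendall hindep y i j).integrable_mul (integrable_pow_of_memLp hg hi)
    (integrable_kendall_single_add hf hj y)

lemma integral_kendall_single_add_of_indepFun [IsFiniteMeasure μ] (hindep : IndepFun f g μ)
    (hf : MemLp f n μ) (hg : MemLp g n μ) (y : ℕ → ℝ) :
    ∫ ω, kendall n (Pi.single 1 (f ω + g ω) + y) ∂μ =
      ∑ p ∈ antidiagonal n, (n.choose p.1 : ℝ) *
        ((∫ ω, g ω ^ p.1 ∂μ) * ∫ ω, kendall p.2 (Pi.single 1 (f ω) + y) ∂μ) := by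
  simp only [kendall_single_add_add]
  rw [integral_finsetSum _ fun p hp =>
    (integrable_pow_mul_kendall hindep hf hg y (fst_le hp) (snd_le hp)).const_mul _]
  refine sum_congr rfl fun p hp => ?_
  rw [integral_const_mul, (indepFun_pow_kendall hindep y p.1 p.2).integral_fun_mul_eq_mul_integral
    (hg.1.pow p.1) (integrable_kendall_single_add hf (snd_le hp) y).1]

/-- The random variable `f` has a finite moment of order `n`, and `κ 1, …, κ n` are its first `n`
cumulants under `μ`. The relation of order `0`, being automatic for a probability measure, is not
imposed, and the other values of `κ` are irrelevant. -/
structure HasCumulants (f : Ω → ℝ) (κ : ℕ → ℝ) (n : ℕ) (μ : Measure Ω) : Prop where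
  memLp : MemLp f n μ
  integral_pow_of_ne_zero : ∀ k, k ≠ 0 → k ≤ n → ∫ ω, f ω ^ k ∂μ = kendall k κ

namespace HasCumulants

lemma of_centered (hn : n ≠ 0) (hf : AEStronglyMeasurable f μ)
    (hmom : Integrable (fun ω => |f ω| ^ n) μ) (hcent : ∫ ω, f ω ∂μ = 0)
    (hκ : ∀ k, 2 ≤ k → k ≤ n →
      ∫ ω, f ω ^ k ∂μ = kendall k fun j => if j = 1 then 0 else κ j) :
    HasCumulants f (fun j => if j = 1 then 0 else κ j) n μ where
  memLp := (integrable_norm_rpow_iff hf (Nat.cast_ne_zero.2 hn) (ENNReal.natCast_ne_top n)).1 <| by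
    simpa using hmom
  integral_pow_of_ne_zero
    | 0, hk, _ => absurd rfl hk
    | 1, _, _ => by simp [hcent, kendall_succ]
    | k + 2, _, hkn => hκ (k + 2) (Nat.le_add_left 2 k) hkn

lemma mono [IsFiniteMeasure μ] (h : HasCumulants f κ n μ) (hk : k ≤ n) : HasCumulants f κ k μ where
  memLp := h.memLp.mono_exponent (Nat.cast_le.2 hk)
  integral_pow_of_ne_zero j hj hjk := h.integral_pow_of_ne_zero j hj (hjk.trans hk)

variable [IsProbabilityMeasure μ]

lemma integral_pow (h : HasCumulants f κ n μ) (hk : k ≤ n) :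
    ∫ ω, f ω ^ k ∂μ = kendall k κ := by
  rcases eq_or_ne k 0 with rfl | hk0
  · simp [kendall_zero]
  · exact h.integral_pow_of_ne_zero k hk0 hk

lemma integral_kendall_single_add (h : HasCumulants f κ n μ) (y : ℕ → ℝ) :
    ∫ ω, kendall n (Pi.single 1 (f ω) + y) ∂μ = kendall n (κ + y) := by
  simp only [kendall_single_add]
  rw [integral_finsetSum _ fun p hp =>
    ((integrable_pow_of_memLp h.memLp (fst_le hp)).const_mul _).mul_const _, kendall_add]
  refine sum_congr rfl fun p hp => ?_
  rw [integral_mul_const, integral_const_mul, h.integral_pow (fst_le hp)]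

-- Centering `f` by `-κ` annihilates every term of the binomial expansion except the power of
-- `g - f`, so the moments of the increment come out without inverting a triangular system.
lemma sub_of_indepFun (hf : HasCumulants f κ n μ) (hg : HasCumulants g η n μ)
    (hindep : IndepFun f (g - f) μ) : HasCumulants (g - f) (η - κ) n μ := by
  have hmem : MemLp (g - f) n μ := hg.memLp.sub hf.memLp
  refine ⟨hmem, fun k _ hk => ?_⟩
  have hk' : (k : ENNReal) ≤ n := Nat.cast_le.2 hk
  symm
  calc kendall k (η - κ)
      = ∫ ω, kendall k (Pi.single 1 (f ω + (g - f) ω) + -κ) ∂μ := by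
        simp only [Pi.sub_apply, add_sub_cancel]
        rw [(hg.mono hk).integral_kendall_single_add, sub_eq_add_neg]
    _ = ∑ p ∈ antidiagonal k, (k.choose p.1 : ℝ) *
          ((∫ ω, (g - f) ω ^ p.1 ∂μ) * ∫ ω, kendall p.2 (Pi.single 1 (f ω) + -κ) ∂μ) :=
        integral_kendall_single_add_of_indepFun hindep (hf.memLp.mono_exponent hk')
          (hmem.mono_exponent hk') (-κ)
    _ = ∑ p ∈ antidiagonal k, (k.choose p.1 : ℝ) *
          ((∫ ω, (g - f) ω ^ p.1 ∂μ) * kendall p.2 0) := by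
        refine sum_congr rfl fun p hp => ?_
        rw [(hf.mono ((snd_le hp).trans hk)).integral_kendall_single_add, add_neg_cancel]
    _ = ∫ ω, (g - f) ω ^ k ∂μ := by
        rw [sum_antidiagonal_eq_of_snd_ne_zero fun i j hj => by simp [kendall_zero_right hj]]
        simp [kendall_zero]

lemma condExp_kendall_single_add {m : MeasurableSpace Ω} (hm : m ≤ mΩ) {D Y : Ω → ℝ}
    (hD : HasCumulants D κ n μ) (hD_meas : Measurable[mΩ] D) (hY : MemLp Y n μ)
    (hY_meas : Measurable[m] Y) (hindep : Indep (MeasurableSpace.comap D inferInstance) m μ)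
    (y : ℕ → ℝ) :
    μ[fun ω => kendall n (Pi.single 1 (Y ω + D ω) + y) | m] =ᵐ[μ]
      fun ω => kendall n (κ + (Pi.single 1 (Y ω) + y)) := by
  let G (i : ℕ) (ω : Ω) : ℝ := kendall i (Pi.single 1 (Y ω) + y)
  have hG_meas (i : ℕ) : StronglyMeasurable[m] (G i) :=
    ((continuous_kendall_single_add y i).measurable.comp hY_meas).stronglyMeasurable
  have hD_pow_meas (j : ℕ) : StronglyMeasurable[MeasurableSpace.comap D inferInstance] (D ^ j) :=
    ((comap_measurable D).pow_const j).stronglyMeasurable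
  have hint {p : ℕ × ℕ} (hp : p ∈ antidiagonal n) : Integrable (D ^ p.1 * G p.2) μ :=
    integrable_pow_mul_kendall (indepFun_of_indep_comap hY_meas hindep) hY hD.memLp y
      (fst_le hp) (snd_le hp)
  have hexpand : (fun ω => kendall n (Pi.single 1 (Y ω + D ω) + y)) =
      ∑ p ∈ antidiagonal n, (n.choose p.1 : ℝ) • (D ^ p.1 * G p.2) := by
    ext ω
    rw [kendall_single_add_add, Finset.sum_apply]
    rfl
  have hterm {p : ℕ × ℕ} (hp : p ∈ antidiagonal n) :
      μ[(n.choose p.1 : ℝ) • (D ^ p.1 * G p.2) | m] =ᵐ[μ]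
        fun ω => (n.choose p.1 : ℝ) * kendall p.1 κ * G p.2 ω := by
    filter_upwards [condExp_smul (μ := μ) (n.choose p.1 : ℝ) (D ^ p.1 * G p.2) m,
      condExp_mul_of_indep hm hD_meas.comap_le (hG_meas p.2) (hD_pow_meas p.1) hindep (hint hp)
        (integrable_pow_of_memLp hD.memLp (fst_le hp))] with ω hsmul hmul
    rw [hsmul, Pi.smul_apply, hmul, smul_eq_mul, ← hD.integral_pow (fst_le hp), mul_assoc]
    rfl
  rw [hexpand]
  filter_upwards [condExp_finsetSum (fun p hp => (hint hp).smul (n.choose p.1 : ℝ)) m,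
    (ae_ball_iff (antidiagonal n).countable_toSet).2 fun p hp => hterm hp] with ω hsum hterms
  rw [hsum, Finset.sum_apply, kendall_add]
  exact sum_congr rfl hterms

end HasCumulants

end Cumulants

theorem additive_kendall_martingale_general {Ω ι : Type*} [Preorder ι] {mΩ : MeasurableSpace Ω}
    {μ : Measure Ω} [IsProbabilityMeasure μ] {ℱ : Filtration ι mΩ} {X : ι → Ω → ℝ}
    {κ : ι → ℕ → ℝ} {n : ℕ} (hadapt : Adapted ℱ X)
    (hindep : ∀ s t, s ≤ t →
      Indep (MeasurableSpace.comap (X t - X s) inferInstance) (ℱ s) μ)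
    (hX : ∀ t, HasCumulants (X t) (κ t) n μ) :
    Martingale (fun t ω => kendall n (Pi.single 1 (X t ω) - κ t)) ℱ μ := by
  simp only [sub_eq_add_neg (Pi.single 1 _)]
  refine ⟨fun t => ((continuous_kendall_single_add (-κ t) n).measurable.comp
    (hadapt t)).stronglyMeasurable, fun s t hst => ?_⟩
  have hincr : HasCumulants (X t - X s) (κ t - κ s) n μ :=
    (hX s).sub_of_indepFun (hX t) (indepFun_of_indep_comap (hadapt s) (hindep s t hst))
  have hincr_meas : Measurable (X t - X s) :=
    ((hadapt t).mono (ℱ.le t) le_rfl).sub ((hadapt s).mono (ℱ.le s) le_rfl)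
  have hcond := hincr.condExp_kendall_single_add (ℱ.le s) hincr_meas (hX s).memLp (hadapt s)
    (hindep s t hst) (-κ t)
  have hargs (x : ℕ → ℝ) : κ t - κ s + (x + -κ t) = x + -κ s := by abel
  simpa only [Pi.sub_apply, add_sub_cancel, hargs] using hcond

/-- **Theorem 1.** For a centered additive process `X` (independent increments, continuous
in probability, cadlag, `X_0 = 0`) with finite moments of all orders, and cumulant functions
`F_n` determined by the moment–cumulant relations `E[X_t^n] = Γ_n(0, F_2(t), …, F_n(t))`,
the process `M^{(n)}_t = Γ_n(X_t, -F_2(t), …, -F_n(t))` is a martingale with respect to the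
natural filtration of `X`, for every `n ≥ 1`. -/
theorem additive_kendall_martingale
    {Ω : Type*} {mΩ : MeasurableSpace Ω} (μ : Measure Ω) [IsProbabilityMeasure μ]
    (X : ℝ≥0 → Ω → ℝ) (hXmeas : ∀ t, StronglyMeasurable (X t))
    (hX0 : ∀ ω, X 0 ω = 0)
    (hindep : ∀ s t : ℝ≥0, s ≤ t →
      Indep (MeasurableSpace.comap (fun ω => X t ω - X s ω) (inferInstance : MeasurableSpace ℝ))
        (MeasureTheory.Filtration.natural X hXmeas s) μ)
    (hcontP : ∀ (t : ℝ≥0) (ε : ℝ), 0 < ε →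
      Tendsto (fun s => μ {ω | ε ≤ |X s ω - X t ω|}) (𝓝 t) (𝓝 0))
    (hcadlag : ∀ ω, IsCadlag fun t => X t ω)
    (hmom : ∀ (n : ℕ) (t : ℝ≥0), Integrable (fun ω => |X t ω| ^ n) μ)
    (hcent : ∀ t : ℝ≥0, ∫ ω, X t ω ∂μ = 0)
    (F : ℕ → ℝ≥0 → ℝ)
    (hF : ∀ n, 2 ≤ n → ∀ t : ℝ≥0,
      ∫ ω, X t ω ^ n ∂μ = kendall n fun k => if k = 1 then 0 else F k t)
    (n : ℕ) (hn : 1 ≤ n) :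
    Martingale (fun t ω => kendall n fun k => if k = 1 then X t ω else -F k t)
      (MeasureTheory.Filtration.natural X hXmeas) μ := by
  simpa only [ite_neg_eq_single_sub] using additive_kendall_martingale_general
    (fun t => (Filtration.stronglyAdapted_natural hXmeas t).measurable) hindep fun t =>
      .of_centered (Nat.one_le_iff_ne_zero.1 hn) (hXmeas t).aestronglyMeasurable (hmom n t)
        (hcent t) fun k hk _ => hF k hk t
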